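/- There is no algorithm for the equivalence problem of regular graph constraints over the class of heaps: encoding finite graphs (graphs whose node set is Fin n for some n) as natural numbers via a standard encoding, the set of pairs of graphs ⟨G1, G2⟩ such that G1 ≈_H G2 is not a computable (decidable) set, where H is the class of all heaps. -/

import Mathlib

universe u v w

/-- A (pre)graph: a node set `V` inside an ambient type, two edge relations
`s1` and `s2`, and distinguished constants `null` and `root`. -/
structure PreGraph (α : Type u) where
  V : Set α
  s1 : α → α → Prop
  s2 : α → α → Prop
  null : α
  root : α

namespace PreGraph

/-- `G` is a graph: `V` is finite, `root` and `null` are distinct nodes of `V`,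
edges lie within `V`, and `⟨null, x⟩ ∈ sᵢ` iff `x = null`. -/
def IsGraph {α : Type u} (G : PreGraph α) : Prop :=
  G.V.Finite ∧
  G.null ∈ G.V ∧ G.root ∈ G.V ∧ G.root ≠ G.null ∧
  (∀ x y, G.s1 x y → x ∈ G.V ∧ y ∈ G.V) ∧
  (∀ x y, G.s2 x y → x ∈ G.V ∧ y ∈ G.V) ∧
  (∀ x, G.s1 G.null x ↔ x = G.null) ∧
  (∀ x, G.s2 G.null x ↔ x = G.null)

/-- `h` is a homomorphism from `G` to `G'`. -/
def IsHom {α : Type u} {β : Type v} (G : PreGraph α) (G' : PreGraph β) (h : α → β) : Prop :=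
  (∀ x ∈ G.V, h x ∈ G'.V) ∧
  (∀ x y, G.s1 x y → G'.s1 (h x) (h y)) ∧
  (∀ x y, G.s2 x y → G'.s2 (h x) (h y)) ∧
  (∀ x ∈ G.V, (h x = G'.root ↔ x = G.root)) ∧
  (∀ x ∈ G.V, (h x = G'.null ↔ x = G.null))

/-- `G → G'` : there exists a homomorphism from `G` to `G'`. -/
def Maps {α : Type u} {β : Type v} (G : PreGraph α) (G' : PreGraph β) : Prop :=
  ∃ h : α → β, IsHom G G' h

/-- An edge of `G` (either an `s1`- or an `s2`-edge). -/
def edge {α : Type u} (G : PreGraph α) (x y : α) : Prop := G.s1 x y ∨ G.s2 x y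

/-- `G` is a heap: a graph in which `s1` and `s2` are total functions on `V`
and every node other than `null` is reachable from `root`. -/
def IsHeap {α : Type u} (G : PreGraph α) : Prop :=
  IsGraph G ∧
  (∀ x ∈ G.V, ∃! y, G.s1 x y) ∧
  (∀ x ∈ G.V, ∃! y, G.s2 x y) ∧
  (∀ x ∈ G.V, x ≠ G.null → Relation.ReflTransGen G.edge G.root x)

end PreGraph

/-- `G1 ≈_H G2` : equivalence over the class of all heaps. -/
def HeapEquiv {α : Type u} {β : Type v} (G1 : PreGraph α) (G2 : PreGraph β) : Prop :=
  ∀ (γ : Type) (H : PreGraph γ), PreGraph.IsHeap H →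
    (PreGraph.Maps H G1 ↔ PreGraph.Maps H G2)

/-- A finite graph whose node set is `Fin n`, with concrete (`Bool`-valued)
edge relations, so that it can be encoded as a natural number. -/
structure FinGraph where
  n : ℕ
  s1 : Fin n → Fin n → Bool
  s2 : Fin n → Fin n → Bool
  null : Fin n
  root : Fin n
  root_ne_null : root ≠ null
  null_s1 : ∀ x, s1 null x = true ↔ x = null
  null_s2 : ∀ x, s2 null x = true ↔ x = null

/-- The graph (with node set `Fin n`) determined by a `FinGraph`. -/
def FinGraph.toPreGraph (G : FinGraph) : PreGraph (Fin G.n) where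
  V := Set.univ
  s1 := fun x y => G.s1 x y = true
  s2 := fun x y => G.s2 x y = true
  null := G.null
  root := G.root

/-- The data `⟨n, s1, s2, null, root⟩` of a finite graph. -/
abbrev GraphData : Type :=
  Σ n : ℕ, (Fin n → Fin n → Bool) × (Fin n → Fin n → Bool) × Fin n × Fin n

/-- A standard encoding of finite graphs as natural numbers, via the standard
encoding of the data `⟨n, s1, s2, null, root⟩`. -/
def FinGraph.encode (G : FinGraph) : ℕ :=
  Encodable.encode (⟨G.n, G.s1, G.s2, G.null, G.root⟩ : GraphData)

/-- A standard encoding of pairs of finite graphs as natural numbers. -/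
def encodePair (G1 G2 : FinGraph) : ℕ := Nat.pair G1.encode G2.encode

namespace HeapUndec

section Source
open Turing


def unary : ℕ → ℕ
  | 0 => 0
  | m + 1 => 2 * unary m + 1

theorem unary_strictMono : StrictMono unary := by
  apply strictMono_nat_of_lt_succ
  intro n
  simp only [unary]; omega

theorem unary_primrec : Primrec unary := by
  have : Primrec (fun n : ℕ => Nat.rec (motive := fun _ => ℕ) 0 (fun _ IH => 2 * IH + 1) n) := by
    refine Primrec.nat_rec₁ 0 ?_
    exact Primrec.succ.comp (Primrec.nat_mul.comp (Primrec.const 2) Primrec.snd)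
  refine this.of_eq ?_
  intro n
  induction n with
  | zero => rfl
  | succ n ih => simp only [unary, ← ih]

theorem trNat_unary (m : ℕ) :
    PartrecToTM2.trNat (unary m) = List.replicate m PartrecToTM2.Γ'.bit1 := by
  induction m with
  | zero => simp [unary, PartrecToTM2.trNat_zero]
  | succ m ih =>
    have h : ((unary (m+1) : ℕ) : Num) = Num.bit1 (unary m : Num) := by
      rw [← Num.ofNat'_eq, ← Num.ofNat'_eq]
      have := Num.ofNat'_bit true (unary m)
      simpa [Nat.bit, unary] using this
    rw [PartrecToTM2.trNat, h, List.replicate_succ, ← ih, PartrecToTM2.trNat]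
    cases ((unary m : ℕ) : Num) with
    | zero => rfl
    | pos p => rfl

theorem source_code : ∃ c : ToPartrec.Code,
    ¬ ComputablePred (fun m : ℕ => (c.eval [unary m]).Dom) := by
  let f : ℕ →. ℕ := fun m => Nat.Partrec.Code.eval (Denumerable.ofNat Nat.Partrec.Code m) 0
  have hf : Partrec f :=
    Nat.Partrec.Code.eval_part.comp (Computable.ofNat _) (Computable.const 0)
  let p : ℕ →. ℕ := fun k => (Nat.rfind (fun m => (Part.some (decide (unary m = k)) : Part Bool))).bind f
  have hp : Partrec p := by
    refine Partrec.bind (Partrec.rfind ?_) (hf.comp Computable.snd).to₂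
    have h1 : PrimrecPred (fun x : ℕ × ℕ => unary x.2 = x.1) :=
      Primrec.eq.comp (unary_primrec.comp Primrec.snd) Primrec.fst
    exact (Primrec.to_comp h1.decide).partrec.to₂
  obtain ⟨c, hc⟩ := ToPartrec.Code.exists_code (Nat.Partrec'.part_iff₁.2 hp)
  refine ⟨c, fun h => ?_⟩
  have hpu : ∀ m, p (unary m) = f m := by
    intro m
    have : Nat.rfind (fun k => (Part.some (decide (unary k = unary m)) : Part Bool)) = Part.some m := by
      rw [Part.eq_some_iff]
      refine Nat.mem_rfind.2 ⟨?_, ?_⟩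
      · exact Part.mem_some_iff.2 (by simp)
      · intro k hk
        have := unary_strictMono hk
        exact Part.mem_some_iff.2 (by simp; omega)
    simp only [p, this]
    exact Part.bind_some _ _
  have h2 : ComputablePred (fun m : ℕ => (f m).Dom) := by
    refine h.of_eq ?_
    intro m
    have h3 : c.eval [unary m] = pure <$> p (unary m) := hc ⟨[unary m], rfl⟩
    rw [h3, hpu]
    rfl
  apply ComputablePred.halting_problem 0
  have h4 := h2
  obtain ⟨g, hg, hg'⟩ := ComputablePred.computable_iff.1 h2
  refine ComputablePred.computable_iff.2 ⟨fun c => g (Encodable.encode c), hg.comp Computable.encode, ?_⟩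
  funext c
  have := congrFun hg' (Encodable.encode c)
  simpa [f] using this

theorem source_tm : ∃ (Γ Λ : Type) (_ : Inhabited Γ) (_ : Inhabited Λ) (_ : Finite Γ)
    (M : TM0.Machine Γ Λ) (S : Set Λ) (X B : Γ), S.Finite ∧ TM0.Supports M S ∧
    ¬ ComputablePred (fun m : ℕ =>
      (StateTransition.eval (TM0.step M) (TM0.init (X :: List.replicate m B))).Dom) := by
  obtain ⟨c, hc⟩ := source_code
  let iL : Inhabited PartrecToTM2.Λ' := ⟨PartrecToTM2.trNormal c PartrecToTM2.Cont'.halt⟩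
  let M1 := TM2to1.tr PartrecToTM2.tr
  have hs1 : TM1.Supports M1 _ := TM2to1.tr_supports PartrecToTM2.tr
    (PartrecToTM2.tr_supports c PartrecToTM2.Cont'.halt)
  have hs0 := TM1to0.tr_supports M1 hs1
  refine ⟨_, _, inferInstance, inferInstance, ?_, TM1to0.tr M1, _, 
    (true, Function.update (fun _ => none) PartrecToTM2.K'.main (some PartrecToTM2.Γ'.cons)),
    (false, Function.update (fun _ => none) PartrecToTM2.K'.main (some PartrecToTM2.Γ'.bit1)),
     Finset.finite_toSet _, hs0, ?_⟩
  · unfold TM2to1.Γ'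
    have hK : Finite PartrecToTM2.K' := by
      refine Finite.of_surjective (fun i : Fin 4 => (![PartrecToTM2.K'.main, PartrecToTM2.K'.rev,
        PartrecToTM2.K'.aux, PartrecToTM2.K'.stack] : Fin 4 → PartrecToTM2.K') i) ?_
      intro k
      cases k
      · exact ⟨0, rfl⟩
      · exact ⟨1, rfl⟩
      · exact ⟨2, rfl⟩
      · exact ⟨3, rfl⟩
    have : Finite (PartrecToTM2.K' → Option PartrecToTM2.Γ') := inferInstance
    exact (inferInstance : Finite (Bool × (PartrecToTM2.K' → Option PartrecToTM2.Γ')))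
  intro h
  apply hc
  refine h.of_eq ?_
  intro m
  have e1 : (TM0.eval (TM1to0.tr M1) (TM2to1.trInit PartrecToTM2.K'.main (PartrecToTM2.trList [unary m]))).Dom ↔ 
     (TM2.eval PartrecToTM2.tr PartrecToTM2.K'.main (PartrecToTM2.trList [unary m])).Dom := by
    rw [TM1to0.tr_eval]
    exact TM2to1.tr_eval_dom _ _ _
  have e2 : TM2.init PartrecToTM2.K'.main (PartrecToTM2.trList [unary m]) = PartrecToTM2.init c [unary m] := by
    unfold TM2.init PartrecToTM2.init
    congr 1
    funext k
    cases k <;> rfl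
  have e3 : (TM2.eval PartrecToTM2.tr PartrecToTM2.K'.main (PartrecToTM2.trList [unary m])).Dom ↔ (c.eval [unary m]).Dom := by
    unfold TM2.eval
    rw [e2, PartrecToTM2.tr_eval]
    rfl
  rw [← e3, ← e1]
  unfold TM0.eval
  have e4 : TM2to1.trInit PartrecToTM2.K'.main (PartrecToTM2.trList [unary m]) = 
     (true, Function.update (fun _ => none) PartrecToTM2.K'.main (some PartrecToTM2.Γ'.cons)) :: 
      List.replicate m (false, Function.update (fun _ => none) PartrecToTM2.K'.main (some PartrecToTM2.Γ'.bit1)) := by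
    simp [TM2to1.trInit, PartrecToTM2.trList, trNat_unary]
    exact congrArg₂ List.cons rfl List.map_replicate
  rw [e4]
  rfl



/-- Abstract colour patterns. -/
structure Pat (D : Type) where
  W : D → Prop
  st : D → Prop
  V1 : D → Prop
  V2 : D → Prop
  V3 : D → Prop
  V4 : D → Prop
  hn : D → Prop
  vn : D → Prop
  h : D → D → Prop
  v : D → D → Prop

def Pat.valid {D : Type} (P : Pat D) (n a : ℕ) (d : D) : Prop :=
  P.W d ∧ (a = 1 → P.V1 d) ∧ (a = 2 → P.V2 d) ∧ (2 < a → a < n + 3 → P.V3 d) ∧ (a = n + 3 → P.V4 d)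

def chainE (n a b : ℕ) : Prop :=
  (a = 0 ∧ b = 0) ∨ (a = 1 ∧ b = 1) ∨ (1 ≤ a ∧ a < n + 3 ∧ b = a + 1) ∨ (a = n + 3 ∧ b = n + 3)

/-- A tiling of the rectangle `[0, w] × [0, N]`. -/
structure Rect {D : Type} (P : Pat D) (n w N : ℕ) (τ : ℕ → ℕ → D) (c : ℕ → ℕ) : Prop where
  st : P.st (τ 0 0)
  c0 : c 0 = 1
  cw : c w = n + 3
  chain : ∀ i < w, chainE n (c i) (c (i + 1))
  val0 : ∀ i ≤ w, P.valid n (c i) (τ i 0)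
  hW : ∀ i ≤ w, ∀ j ≤ N, P.W (τ i j)
  h : ∀ i < w, ∀ j ≤ N, P.h (τ i j) (τ (i + 1) j)
  hn : ∀ j ≤ N, P.hn (τ w j)
  v : ∀ i ≤ w, ∀ j < N, P.v (τ i j) (τ i (j + 1))
  vn : ∀ i ≤ w, P.vn (τ i N)

theorem chain_shape {n w : ℕ} {c : ℕ → ℕ} (c0 : c 0 = 1) (cw : c w = n + 3)
    (chain : ∀ i < w, chainE n (c i) (c (i + 1))) :
    ∃ k, k + n + 1 ≤ w ∧ (∀ i < k, c i = 1) ∧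
      ∀ i, k ≤ i → i ≤ w → c i = min (2 + (i - k)) (n + 3) := by
  have hex : ∃ i, c i ≠ 1 := ⟨w, by omega⟩
  classical
  let k := Nat.find hex
  have hk : c k ≠ 1 := Nat.find_spec hex
  have hlt : ∀ i < k, c i = 1 := fun i hi => by
    have := Nat.find_min hex hi
    omega
  have hkw : k ≤ w := Nat.find_min' hex (by omega)
  have hk0 : 0 < k := by
    rcases Nat.eq_zero_or_pos k with h | h
    · rw [h] at hk; exact absurd c0 hk
    · exact h
  have hge : ∀ t, k + t ≤ w → c (k + t) = min (2 + t) (n + 3) := by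
    intro t
    induction t with
    | zero =>
      intro _
      have h1 := hlt (k - 1) (by omega)
      have h2 := chain (k - 1) (by omega)
      rw [show k - 1 + 1 = k by omega] at h2
      unfold chainE at h2
      simp only [Nat.add_zero]
      omega
    | succ t ih =>
      intro ht
      have h1 := ih (by omega)
      have h2 := chain (k + t) (by omega)
      unfold chainE at h2
      rw [← Nat.add_assoc]
      omega
  refine ⟨k, ?_, hlt, ?_⟩
  · have := hge (w - k) (by omega)
    rw [show k + (w - k) = w by omega] at this
    omega
  · intro i h1 h2
    have := hge (i - k) (by omega)
    rwa [show k + (i - k) = i by omega] at this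

section TM
variable {Γ Λ : Type} [Inhabited Γ] [Inhabited Λ]

structure Tile (Γ Λ : Type) (S : Set Λ) where
  q : S
  hd : Γ
  l : Γ
  s : Γ
  r : Γ
  z : Fin 3
  lb : Bool
  rb : Bool

theorem Tile.finite {Γ Λ : Type} [Finite Γ] (S : Set Λ) (hS : S.Finite) : Finite (Tile Γ Λ S) := by
  have : Finite S := hS
  refine Finite.of_injective
    (fun t : Tile Γ Λ S => (t.q, t.hd, t.l, t.s, t.r, t.z, t.lb, t.rb)) ?_
  rintro ⟨⟩ ⟨⟩ h
  simpa using h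

def newSym {S : Set Λ} (t : Tile Γ Λ S) : TM0.Stmt Γ → Γ
  | .move .left => t.l
  | .move .right => t.r
  | .write b => if t.z = 1 then b else t.s

def tmPat (M : TM0.Machine Γ Λ) (S : Set Λ) (X B : Γ) : Pat (Tile Γ Λ S) where
  W t := (t.z = 1 → t.s = t.hd) ∧ (t.lb = true → t.s = default ∧ t.l = default) ∧
    (t.rb = true → t.s = default ∧ t.r = default)
  st t := t.lb = true
  V1 t := (t.q : Λ) = default ∧ t.z = 0 ∧ t.s = default
  V2 t := (t.q : Λ) = default ∧ t.z = 1 ∧ t.s = X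
  V3 t := (t.q : Λ) = default ∧ t.z = 2 ∧ t.s = B
  V4 t := (t.q : Λ) = default ∧ t.z = 2 ∧ t.s = default
  hn t := t.rb = true
  vn t := M t.q t.hd = none
  h t t' := t.rb = false ∧ t.q = t'.q ∧ t.hd = t'.hd ∧ t.r = t'.s ∧ t'.l = t.s
  v t t' := t.z = t'.z ∧ t.lb = t'.lb ∧ t.rb = t'.rb ∧
    ∃ q' a, M t.q t.hd = some (q', a) ∧ (t'.q : Λ) = q' ∧ t'.s = newSym t a

theorem mk1_nth (X B : Γ) (n : ℕ) (p : ℤ) : (Tape.mk₁ (X :: List.replicate n B)).nth p =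
    if p = 0 then X else if 0 < p ∧ p ≤ n then B else default := by
  rcases p with (p | p)
  · rcases p with _ | p
    · rfl
    · have h1 : (Tape.mk₁ (X :: List.replicate n B)).nth (Int.ofNat (p + 1)) =
        (ListBlank.mk (List.replicate n B)).nth p := rfl
      rw [h1, ListBlank.nth_mk]
      simp only [List.getI_eq_getElem?_getD, List.getElem?_replicate, Int.ofNat_eq_natCast]
      by_cases h : p < n
      · simp [h]; intro _ ; omega
      · simp [h]; intro _ ; omega
  · have h1 : (Tape.mk₁ (X :: List.replicate n B)).nth (Int.negSucc p) =
        (ListBlank.mk ([] : List Γ)).nth p := rfl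
    rw [h1, ListBlank.nth_mk]
    have h2 : ¬ (Int.negSucc p = 0) := by omega
    simp [h2]

def actT (T : Tape Γ) : TM0.Stmt Γ → Tape Γ
  | .move d => T.move d
  | .write a => T.write a

theorem step_eq (M : TM0.Machine Γ Λ) (c : TM0.Cfg Γ Λ) :
    TM0.step M c = (M c.q c.Tape.head).map fun x => ⟨x.1, actT c.Tape x.2⟩ := by
  rcases c with ⟨q, T⟩
  simp only [TM0.step]
  congr 1

theorem nth_zero (T : Tape Γ) : T.nth 0 = T.head := rfl

theorem rect_halts {M : TM0.Machine Γ Λ} {S : Set Λ} {X B : Γ} {n w N : ℕ}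
    {τ : ℕ → ℕ → Tile Γ Λ S} {c : ℕ → ℕ} (R : Rect (tmPat M S X B) n w N τ c) :
    (StateTransition.eval (TM0.step M) (TM0.init (X :: List.replicate n B))).Dom := by
  obtain ⟨k, hkw, hlt, hge⟩ := chain_shape R.c0 R.cw R.chain
  have hlb : ∀ j ≤ N, (τ 0 j).lb = true := by
    intro j
    induction j with
    | zero => intro _; exact R.st
    | succ j ih =>
      intro hj
      have h1 := R.v 0 (by omega) j (by omega)
      rw [← h1.2.1]
      exact ih (by omega)
  have hrb : ∀ j ≤ N, (τ w j).rb = true := R.hn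
  have hz : ∀ j ≤ N, ∀ i ≤ w, ((τ i j).z = 1 ↔ i = k) := by
    intro j
    induction j with
    | zero =>
      intro _ i hi
      obtain ⟨-, v1, v2, v3, v4⟩ := R.val0 i hi
      rcases lt_trichotomy i k with h | h | h
      · rw [(v1 (hlt i h)).2.1]; simp; omega
      · have := hge i (by omega) hi
        rw [(v2 (by omega)).2.1]; simp; omega
      · have := hge i (by omega) hi
        by_cases h5 : c i = n + 3
        · rw [(v4 h5).2.1]; simp; omega
        · rw [(v3 (by omega) (by omega)).2.1]; simp; omega
    | succ j ih =>
      intro hj i hi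
      rw [← (R.v i hi j (by omega)).1]
      exact ih (by omega) i hi
  have hqh : ∀ j ≤ N, ∀ i ≤ w, (τ i j).q = (τ 0 j).q ∧ (τ i j).hd = (τ 0 j).hd := by
    intro j hj i
    induction i with
    | zero => simp
    | succ i ih =>
      intro hi
      have h1 := R.h i (by omega) j hj
      have h2 := ih (by omega)
      exact ⟨by rw [← h1.2.1, h2.1], by rw [← h1.2.2.1, h2.2]⟩
  have hl : ∀ j ≤ N, ∀ i, i + 1 ≤ w → (τ (i + 1) j).l = (τ i j).s := 
    fun j hj i hi => (R.h i (by omega) j hj).2.2.2.2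
  have hr : ∀ j ≤ N, ∀ i, i + 1 ≤ w → (τ i j).r = (τ (i + 1) j).s := 
    fun j hj i hi => (R.h i (by omega) j hj).2.2.2.1
  have inv : ∀ j ≤ N, ∃ cfg : TM0.Cfg Γ Λ,
      StateTransition.Reaches (TM0.step M) (TM0.init (X :: List.replicate n B)) cfg ∧
      ((τ 0 j).q : Λ) = cfg.q ∧ (∀ i ≤ w, (τ i j).s = cfg.Tape.nth ((i : ℤ) - k)) ∧
      (∀ p : ℤ, (p < 0 ∨ (w : ℤ) < p) → cfg.Tape.nth (p - k) = default) := by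
    intro j
    induction j with
    | zero =>
      intro _
      refine ⟨_, Relation.ReflTransGen.refl, ?_, ?_, ?_⟩
      · obtain ⟨-, v1, v2, v3, v4⟩ := R.val0 0 (by omega)
        exact (v1 R.c0).1
      · intro i hi
        obtain ⟨-, v1, v2, v3, v4⟩ := R.val0 i hi
        simp only [TM0.init, mk1_nth]
        rcases lt_trichotomy i k with h | h | h
        · rw [(v1 (hlt i h)).2.2, if_neg (by omega), if_neg (by omega)]
        · have := hge i (by omega) hi
          rw [(v2 (by omega)).2.2, if_pos (by omega)]
        · have := hge i (by omega) hi
          by_cases h5 : c i = n + 3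
          · rw [(v4 h5).2.2, if_neg (by omega), if_neg (by omega)]
          · rw [(v3 (by omega) (by omega)).2.2, if_neg (by omega), if_pos (by omega)]
      · intro p hp
        simp only [TM0.init, mk1_nth]
        rw [if_neg (by omega), if_neg (by omega)]
    | succ j ih =>
      intro hj
      obtain ⟨cfg, hreach, hq, hs, hout⟩ := ih (by omega)
      have hhd : (τ 0 j).hd = cfg.Tape.head := by
        rw [← (hqh j (by omega) k (by omega)).2]
        have h1 := (R.hW k (by omega) j (by omega)).1 ((hz j (by omega) k (by omega)).2 rfl)
        rw [← h1, hs k (by omega), sub_self, nth_zero]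
      obtain ⟨-, -, -, q', a, hM, hq', -⟩ := R.v 0 (by omega) j (by omega)
      refine ⟨⟨q', actT cfg.Tape a⟩, hreach.tail ?_, hq', ?_, ?_⟩
      · rw [step_eq, ← hq, ← hhd, hM]; rfl
      · intro i hi
        obtain ⟨-, -, -, q'', a', hM', -, hs'⟩ := R.v i hi j (by omega)
        rw [(hqh j (by omega) i hi).1, (hqh j (by omega) i hi).2, hM] at hM'
        obtain ⟨rfl, rfl⟩ : q' = q'' ∧ a = a' := by simpa using hM'
        rw [hs']
        rcases a with (d | b)
        · rcases d
          · simp only [newSym, actT, Tape.move_left_nth]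
            rcases i with _ | i
            · rw [((R.hW 0 (by omega) j (by omega)).2.1 (hlb j (by omega))).2]
              have := hout (-1) (by omega)
              rw [← this]; congr 1; push_cast; ring
            · rw [hl j (by omega) i hi, hs i (by omega)]
              congr 1; push_cast; ring
          · simp only [newSym, actT, Tape.move_right_nth]
            rcases Nat.lt_or_ge i w with h | h
            · rw [hr j (by omega) i h, hs (i + 1) h]
              congr 1; push_cast; ring
            · obtain rfl : i = w := by omega
              rw [((R.hW i (by omega) j (by omega)).2.2 (hrb j (by omega))).2]
              have := hout (i + 1) (by omega)
              rw [← this]; congr 1; ring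
        · simp only [newSym, actT, Tape.write_nth, hz j (by omega : j ≤ N) i hi]
          by_cases h : i = k
          · rw [if_pos h, if_pos (by omega)]
          · rw [if_neg h, if_neg (by omega), hs i hi]
      · intro p hp
        rcases a with (d | b)
        · rcases d
          · simp only [actT, Tape.move_left_nth]
            by_cases h : p = w + 1
            · have h1 := hs w le_rfl
              rw [((R.hW w (by omega) j (by omega)).2.2 (hrb j (by omega))).1] at h1
              rw [h1, h]; congr 1; ring
            · have := hout (p - 1) (by omega)
              rw [← this]; congr 1; ring
          · simp only [actT, Tape.move_right_nth]
            by_cases h : p = -1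
            · have h1 := hs 0 (by omega)
              rw [((R.hW 0 (by omega) j (by omega)).2.1 (hlb j (by omega))).1] at h1
              rw [h1, h]; congr 1; push_cast; ring
            · have := hout (p + 1) (by omega)
              rw [← this]; congr 1; ring
        · simp only [actT, Tape.write_nth]
          rw [if_neg (by omega)]
          exact hout p hp
  obtain ⟨cfg, hreach, hq, hs, -⟩ := inv N le_rfl
  have hhd : (τ 0 N).hd = cfg.Tape.head := by
    rw [← (hqh N le_rfl k (by omega)).2]
    have h1 := (R.hW k (by omega) N le_rfl).1 ((hz N le_rfl k (by omega)).2 rfl)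
    rw [← h1, hs k (by omega), sub_self, nth_zero]
  have hnostep : TM0.step M cfg = none := by
    have h1 : M (τ 0 N).q (τ 0 N).hd = none := R.vn 0 (by omega)
    rw [step_eq, ← hq, ← hhd, h1]; rfl
  exact Part.dom_iff_mem.2 ⟨cfg, StateTransition.mem_eval.2 ⟨hreach, hnostep⟩⟩

theorem reaches_seq {σ : Type} {f : σ → Option σ} {a b : σ} (h : StateTransition.Reaches f a b) :
    ∃ (N : ℕ) (s : ℕ → σ), s 0 = a ∧ s N = b ∧ ∀ j < N, f (s j) = some (s (j + 1)) := by
  induction h with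
  | refl => exact ⟨0, fun _ => a, rfl, rfl, by simp⟩
  | @tail b c _ hbc ih =>
    obtain ⟨N, s, h0, hN, hs⟩ := ih
    refine ⟨N + 1, fun j => if j ≤ N then s j else c, by simpa using h0, by simp, ?_⟩
    intro j hj
    rcases Nat.lt_or_ge j N with h | h
    · simp only [if_pos h.le, if_pos (Nat.succ_le_of_lt h)]
      exact hs j h
    · obtain rfl : j = N := by omega
      simp only [le_refl, if_true, hN, if_neg (show ¬ j + 1 ≤ j by omega)]
      exact hbc

theorem halts_rect {M : TM0.Machine Γ Λ} {S : Set Λ} {X B : Γ} {n : ℕ} (hS : TM0.Supports M S)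
    (hd : (StateTransition.eval (TM0.step M) (TM0.init (X :: List.replicate n B))).Dom) :
    ∃ w N τ c, Rect (tmPat M S X B) n w N τ c := by
  obtain ⟨b, hb⟩ := Part.dom_iff_mem.1 hd
  obtain ⟨hreach, hnostep⟩ := StateTransition.mem_eval.1 hb
  obtain ⟨N, s, h0, rfl, hs⟩ := reaches_seq hreach
  have hs' : ∀ j < N, ∃ a, M (s j).q (s j).Tape.head = some ((s (j + 1)).q, a) ∧
      (s (j + 1)).Tape = actT (s j).Tape a := by
    intro j hj
    have := hs j hj
    rw [step_eq, Option.map_eq_some_iff] at this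
    obtain ⟨⟨q', a⟩, h1, h2⟩ := this
    refine ⟨a, ?_, ?_⟩
    · rw [h1, ← h2]
    · rw [← h2]
  have hq : ∀ j ≤ N, (s j).q ∈ S := by
    intro j
    induction j with
    | zero => intro _; rw [h0]; exact hS.1
    | succ j ih =>
      intro hj
      obtain ⟨a, h1, -⟩ := hs' j hj
      exact hS.2 h1 (ih (by omega))
  have hbl : ∀ j ≤ N, ∀ p : ℤ, (p < -j ∨ (n : ℤ) + j < p) → (s j).Tape.nth p = default := by
    intro j
    induction j with
    | zero =>
      intro _ p hp
      rw [h0]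
      simp only [TM0.init, mk1_nth]
      rw [if_neg (by omega), if_neg (by omega)]
    | succ j ih =>
      intro hj p hp
      obtain ⟨a, -, h2⟩ := hs' j hj
      have ih := ih (by omega)
      push_cast at hp
      rw [h2]
      rcases a with (d | b)
      · rcases d
        · simp only [actT, Tape.move_left_nth]
          exact ih _ (by omega)
        · simp only [actT, Tape.move_right_nth]
          exact ih _ (by omega)
      · simp only [actT, Tape.write_nth]
        rw [if_neg (by omega)]
        exact ih _ (by omega)
  let k : ℕ := N + 2
  let w : ℕ := k + n + 1 + N + 2
  let q' : ℕ → S := fun j => if h : j ≤ N then ⟨(s j).q, hq j h⟩ else ⟨default, hS.1⟩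
  have hq' : ∀ j ≤ N, (q' j : Λ) = (s j).q := by
    intro j hj
    simp only [q', dif_pos hj]
  let τ : ℕ → ℕ → Tile Γ Λ S := fun i j =>
    { q := q' j
      hd := (s j).Tape.head
      l := (s j).Tape.nth ((i : ℤ) - k - 1)
      s := (s j).Tape.nth ((i : ℤ) - k)
      r := (s j).Tape.nth ((i : ℤ) - k + 1)
      z := if i < k then 0 else if i = k then 1 else 2
      lb := decide (i = 0)
      rb := decide (i = w) }
  have hz : ∀ i j, (τ i j).z = 1 ↔ i = k := by
    intro i j
    simp only [τ]
    split_ifs with h1 h2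
    · simp; omega
    · simpa using h2
    · simp; omega
  have hW : ∀ i ≤ w, ∀ j ≤ N, (tmPat M S X B).W (τ i j) := by
    intro i hi j hj
    refine ⟨?_, ?_, ?_⟩
    · rw [hz]
      rintro rfl
      simp only [τ, sub_self, nth_zero]
    · simp only [τ, decide_eq_true_eq]
      rintro rfl
      exact ⟨hbl j hj _ (by omega), hbl j hj _ (by omega)⟩
    · simp only [τ, decide_eq_true_eq]
      rintro rfl
      exact ⟨hbl j hj _ (by omega), hbl j hj _ (by omega)⟩
  refine ⟨w, N, τ, fun i => if i < k then 1 else min (2 + (i - k)) (n + 3), ?_⟩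
  constructor
  · simp [tmPat, τ]
  · simp [k]
  · rw [if_neg (by omega)]; omega
  · intro i hi
    simp only [chainE]
    split_ifs <;> omega
  · intro i hi
    refine ⟨hW i hi 0 (by omega), ?_⟩
    have e1 : ((q' 0 : S) : Λ) = default := by rw [hq' 0 (by omega), h0]; rfl
    simp only [tmPat, τ, h0, TM0.init, mk1_nth, e1, true_and]
    refine ⟨?_, ?_, ?_, ?_⟩
    · intro h
      split_ifs at h with h1
      · rw [if_pos h1, if_neg (by omega), if_neg (by omega)]
        simp
      · omega
    · intro h
      split_ifs at h with h1
      · omega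
      · rw [if_neg h1, if_pos (by omega), if_pos (by omega)]
        simp
    · intro h h'
      split_ifs at h h' with h1
      · omega
      · rw [if_neg h1, if_neg (by omega), if_neg (by omega), if_pos (by omega)]
        simp
    · intro h
      split_ifs at h with h1
      · omega
      · rw [if_neg h1, if_neg (by omega), if_neg (by omega), if_neg (by omega)]
        simp
  · exact hW
  · intro i hi j hj
    simp only [tmPat, τ]
    refine ⟨by simp; omega, trivial, trivial, ?_, ?_⟩
    · congr 1; push_cast; ring
    · congr 1; push_cast; ring
  · intro j hj
    simp [tmPat, τ]
  · intro i hi j hj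
    refine ⟨rfl, rfl, rfl, ?_⟩
    obtain ⟨a, h1, h2⟩ := hs' j hj
    refine ⟨_, a, ?_, hq' (j + 1) hj, ?_⟩
    · simp only [τ]
      rw [hq' j hj.le, h1]
    · have : (τ i (j + 1)).s = (actT (s j).Tape a).nth ((i : ℤ) - k) := by
        rw [← h2]
      rw [this]
      rcases a with (d | b)
      · rcases d
        · simp only [actT, Tape.move_left_nth, newSym, τ]
        · simp only [actT, Tape.move_right_nth, newSym, τ]
      · simp only [actT, Tape.write_nth, newSym, hz]
        by_cases h : i = k
        · rw [if_pos h, if_pos (by omega)]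
        · rw [if_neg h, if_neg (by omega)]
  · intro i hi
    simp only [tmPat, τ]
    rw [hq' N le_rfl]
    rw [step_eq, Option.map_eq_none_iff] at hnostep
    exact hnostep

end TM


end Source

/-- `d`, `c` describe a homomorphism from `H` to the graph of the pattern `P`. -/
structure Colors {D γ : Type} (P : Pat D) (n : ℕ) (H : PreGraph γ) (d : γ → D) (c : γ → ℕ) :
    Prop where
  root2 : H.s2 H.root H.null
  root1 : ¬ H.s1 H.root H.null
  noroot1 : ∀ x, ¬ H.s1 x H.root
  noroot2 : ∀ x, ¬ H.s2 x H.root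
  start : ∀ y, H.s1 H.root y → P.st (d y) ∧ c y = 1
  val : ∀ x ∈ H.V, x ≠ H.root → x ≠ H.null → c x < n + 4 ∧ P.valid n (c x) (d x)
  h : ∀ x y, x ≠ H.root → x ≠ H.null → y ≠ H.null → H.s1 x y →
    chainE n (c x) (c y) ∧ P.h (d x) (d y)
  hn : ∀ x, x ≠ H.root → x ≠ H.null → H.s1 x H.null → (c x = 0 ∨ c x = n + 3) ∧ P.hn (d x)
  v : ∀ x y, x ≠ H.root → x ≠ H.null → y ≠ H.null → H.s2 x y → c y = 0 ∧ P.v (d x) (d y)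
  vn : ∀ x, x ≠ H.root → x ≠ H.null → H.s2 x H.null → P.vn (d x)

/-- The part of `Colors` that does not mention the chain. -/
structure CC {C γ : Type} (Q : Pat C) (H : PreGraph γ) (e : γ → C) : Prop where
  start : ∀ y, H.s1 H.root y → Q.st (e y)
  h : ∀ x y, x ≠ H.root → x ≠ H.null → y ≠ H.null → H.s1 x y → Q.h (e x) (e y)
  hn : ∀ x, x ≠ H.root → x ≠ H.null → H.s1 x H.null → Q.hn (e x)
  v : ∀ x y, x ≠ H.root → x ≠ H.null → y ≠ H.null → H.s2 x y → Q.v (e x) (e y)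
  vn : ∀ x, x ≠ H.root → x ≠ H.null → H.s2 x H.null → Q.vn (e x)

def prodPat {D C : Type} (P : Pat D) (Q : Pat C) : Pat (D × C) where
  W x := P.W x.1
  st x := P.st x.1 ∧ Q.st x.2
  V1 x := P.V1 x.1
  V2 x := P.V2 x.1
  V3 x := P.V3 x.1
  V4 x := P.V4 x.1
  hn x := P.hn x.1 ∧ Q.hn x.2
  vn x := P.vn x.1 ∧ Q.vn x.2
  h x y := P.h x.1 y.1 ∧ Q.h x.2 y.2
  v x y := P.v x.1 y.1 ∧ Q.v x.2 y.2

theorem colors_prod {D C γ : Type} {P : Pat D} {Q : Pat C} {n : ℕ} {H : PreGraph γ} :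
    (∃ d c, Colors (prodPat P Q) n H d c) ↔ (∃ d c, Colors P n H d c) ∧ ∃ e, CC Q H e := by
  constructor
  · rintro ⟨d, c, h⟩
    refine ⟨⟨fun x => (d x).1, c, ?_⟩, fun x => (d x).2, ?_⟩
    · exact ⟨h.root2, h.root1, h.noroot1, h.noroot2,
        fun y hy => ⟨(h.start y hy).1.1, (h.start y hy).2⟩, h.val,
        fun x y h1 h2 h3 h4 => ⟨(h.h x y h1 h2 h3 h4).1, (h.h x y h1 h2 h3 h4).2.1⟩,
        fun x h1 h2 h3 => ⟨(h.hn x h1 h2 h3).1, (h.hn x h1 h2 h3).2.1⟩,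
        fun x y h1 h2 h3 h4 => ⟨(h.v x y h1 h2 h3 h4).1, (h.v x y h1 h2 h3 h4).2.1⟩,
        fun x h1 h2 h3 => (h.vn x h1 h2 h3).1⟩
    · exact ⟨fun y hy => (h.start y hy).1.2,
        fun x y h1 h2 h3 h4 => (h.h x y h1 h2 h3 h4).2.2,
        fun x h1 h2 h3 => (h.hn x h1 h2 h3).2.2,
        fun x y h1 h2 h3 h4 => (h.v x y h1 h2 h3 h4).2.2,
        fun x h1 h2 h3 => (h.vn x h1 h2 h3).2⟩
  · rintro ⟨⟨d, c, h⟩, e, g⟩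
    refine ⟨fun x => (d x, e x), c, ?_⟩
    exact ⟨h.root2, h.root1, h.noroot1, h.noroot2,
        fun y hy => ⟨⟨(h.start y hy).1, g.start y hy⟩, (h.start y hy).2⟩, h.val,
        fun x y h1 h2 h3 h4 => ⟨(h.h x y h1 h2 h3 h4).1, (h.h x y h1 h2 h3 h4).2, g.h x y h1 h2 h3 h4⟩,
        fun x h1 h2 h3 => ⟨(h.hn x h1 h2 h3).1, (h.hn x h1 h2 h3).2, g.hn x h1 h2 h3⟩,
        fun x y h1 h2 h3 h4 => ⟨(h.v x y h1 h2 h3 h4).1, (h.v x y h1 h2 h3 h4).2, g.v x y h1 h2 h3 h4⟩,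
        fun x h1 h2 h3 => ⟨h.vn x h1 h2 h3, g.vn x h1 h2 h3⟩⟩

/-- Search modes: go left or right, end with a commutation error, or inactive. -/
inductive Mode where
  | go1 | go2 | err (b : Bool) | off

structure Col where
  m : Mode
  l : Bool
  l1 : Bool
  l2 : Bool

theorem Col.finite : Finite Col := by
  have h : Finite Mode := by
    refine Finite.of_surjective (fun i : Fin 5 => (![Mode.go1, Mode.go2, Mode.err true,
      Mode.err false, Mode.off] : Fin 5 → Mode) i) ?_
    rintro (_ | _ | (_ | _) | _)
    · exact ⟨0, rfl⟩
    · exact ⟨1, rfl⟩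
    · exact ⟨3, rfl⟩
    · exact ⟨2, rfl⟩
    · exact ⟨4, rfl⟩
  refine Finite.of_injective (fun t : Col => (t.m, t.l, t.l1, t.l2)) ?_
  rintro ⟨⟩ ⟨⟩ h
  simpa using h

/-- The pattern saying: there is a cycle, or the two successor functions do not commute. -/
def ccPat : Pat Col where
  W _ := True
  st c := c.m ≠ .off
  V1 _ := True
  V2 _ := True
  V3 _ := True
  V4 _ := True
  hn c := c.l1 = false ∧ c.m ≠ .go1 ∧ ∀ b, c.m = .err b → b = false
  vn c := c.l2 = false ∧ c.m ≠ .go2 ∧ ∀ b, c.m = .err b → b = true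
  h c c' := c.l1 = c'.l ∧ (c.m = .go1 → c'.m ≠ .off) ∧ ∀ b, c.m = .err b → c'.l2 = b
  v c c' := c.l2 = c'.l ∧ (c.m = .go2 → c'.m ≠ .off) ∧ ∀ b, c.m = .err b → c'.l1 = !b

theorem heap_fun {γ : Type} {V : Set γ} {s : γ → γ → Prop} (h : ∀ x ∈ V, ∃! y, s x y) :
    ∃ f : γ → γ, ∀ x ∈ V, ∀ y, s x y ↔ y = f x := by
  have : ∀ x, ∃ y, x ∈ V → ∀ z, s x z ↔ z = y := by
    intro x
    by_cases hx : x ∈ V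
    · obtain ⟨y, hy, hu⟩ := h x hx
      exact ⟨y, fun _ z => ⟨fun hz => hu z hz, fun hz => hz ▸ hy⟩⟩
    · exact ⟨x, fun h => absurd h hx⟩
  choose f hf using this
  exact ⟨f, hf⟩

theorem colors_rect {D γ : Type} {P : Pat D} {n : ℕ} (tp : D → Prop)
    (tp1 : ∀ d, P.vn d → tp d) (tp2 : ∀ d d', P.v d d' → ¬ tp d)
    (tp3 : ∀ d d', P.h d d' → (tp d ↔ tp d'))
    {H : PreGraph γ} (hH : H.IsHeap) {d : γ → D} {c : γ → ℕ} (hc : Colors P n H d c)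
    (hcc : ¬ ∃ e, CC ccPat H e) : ∃ w N τ c, Rect P n w N τ c := by
  classical
  obtain ⟨⟨-, hnull, hroot, hrn, hs1, hs2, hnull1, hnull2⟩, ht1, ht2, -⟩ := hH
  obtain ⟨f1, hf1⟩ := heap_fun ht1
  obtain ⟨f2, hf2⟩ := heap_fun ht2
  have e1 : ∀ x ∈ H.V, H.s1 x (f1 x) := fun x hx => (hf1 x hx _).2 rfl
  have e2 : ∀ x ∈ H.V, H.s2 x (f2 x) := fun x hx => (hf2 x hx _).2 rfl
  have u1 : ∀ x y, H.s1 x y → y = f1 x := fun x y h => (hf1 x (hs1 x y h).1 y).1 h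
  have u2 : ∀ x y, H.s2 x y → y = f2 x := fun x y h => (hf2 x (hs2 x y h).1 y).1 h
  have n1 : f1 H.null = H.null := (u1 _ _ ((hnull1 _).2 rfl)).symm
  have n2 : f2 H.null = H.null := (u2 _ _ ((hnull2 _).2 rfl)).symm
  let c0 := f1 H.root
  have hc0 : c0 ≠ H.null := fun h => hc.root1 (h ▸ e1 _ hroot)
  let R : γ → γ → Prop := fun y x => (y = f1 x ∨ y = f2 x) ∧ y ≠ H.null
  -- no cycles
  have hacc : Acc R c0 := by
    by_contra hna
    apply hcc
    have key : ∀ x, ¬ Acc R x → ¬ (f1 x ≠ H.null ∧ ¬ Acc R (f1 x)) →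
        (f2 x ≠ H.null ∧ ¬ Acc R (f2 x)) := by
      intro x hx h1
      by_contra h2
      apply hx
      constructor
      rintro y ⟨rfl | rfl, hy⟩
      · by_contra h3; exact h1 ⟨hy, h3⟩
      · by_contra h3; exact h2 ⟨hy, h3⟩
    let m : γ → Mode := fun x => if Acc R x then .off else
      if f1 x ≠ H.null ∧ ¬ Acc R (f1 x) then .go1 else .go2
    have moff : ∀ x, m x = .off → Acc R x := by
      intro x hx
      by_contra h
      simp only [m, if_neg h] at hx
      split_ifs at hx
    have m1 : ∀ x, m x = .go1 → f1 x ≠ H.null ∧ ¬ Acc R (f1 x) := by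
      intro x hx
      simp only [m] at hx
      split_ifs at hx with h1 h2
      exact h2
    have m2 : ∀ x, m x = .go2 → f2 x ≠ H.null ∧ ¬ Acc R (f2 x) := by
      intro x hx
      simp only [m] at hx
      split_ifs at hx with h1 h2
      exact key x h1 h2
    have m3 : ∀ x b, m x ≠ .err b := by
      intro x b hx
      simp only [m] at hx
      split_ifs at hx
    refine ⟨fun x => ⟨m x, false, false, false⟩, ?_, ?_, ?_, ?_, ?_⟩
    · intro y hy hm
      rw [u1 _ _ hy] at hm
      exact hna (moff _ hm)
    · intro x y _ _ _ hxy
      refine ⟨rfl, ?_, fun b hb => absurd hb (m3 x b)⟩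
      intro h1 h2
      rw [u1 _ _ hxy] at h2
      exact (m1 x h1).2 (moff _ h2)
    · intro x _ _ hxy
      refine ⟨rfl, ?_, fun b hb => absurd hb (m3 x b)⟩
      intro h1
      exact (m1 x h1).1 (u1 _ _ hxy).symm
    · intro x y _ _ _ hxy
      refine ⟨rfl, ?_, fun b hb => absurd hb (m3 x b)⟩
      intro h1 h2
      rw [u2 _ _ hxy] at h2
      exact (m2 x h1).2 (moff _ h2)
    · intro x _ _ hxy
      refine ⟨rfl, ?_, fun b hb => absurd hb (m3 x b)⟩
      intro h1
      exact (m2 x h1).1 (u2 _ _ hxy).symm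
  -- commutation
  let T : γ → γ → Prop := Relation.ReflTransGen (fun x y => R y x)
  have hcomm : ∀ x, T c0 x → f1 (f2 x) = f2 (f1 x) := by
    intro x hx
    by_contra hne
    apply hcc
    obtain ⟨lab, lab0, labne⟩ : ∃ lab : γ → Bool, lab H.null = false ∧
        lab (f1 (f2 x)) = ! lab (f2 (f1 x)) := by
      by_cases h : f1 (f2 x) = H.null
      · refine ⟨fun y => decide (y = f2 (f1 x)), ?_, ?_⟩
        · simp only [decide_eq_false_iff_not]; rw [← h]; exact hne
        · simp [hne]
      · refine ⟨fun y => decide (y = f1 (f2 x)), ?_, ?_⟩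
        · simp only [decide_eq_false_iff_not]; exact fun h' => h h'.symm
        · simp [Ne.symm hne]
    let m : γ → Mode := fun y => if y = x then .err (lab (f2 (f1 x))) else
      if T y x then (if f1 y ≠ H.null ∧ T (f1 y) x then .go1 else .go2) else .off
    have moff : ∀ y, m y = .off → ¬ T y x := by
      intro y hy h
      simp only [m] at hy
      split_ifs at hy
    have m1 : ∀ y, m y = .go1 → f1 y ≠ H.null ∧ T (f1 y) x := by
      intro y hy
      simp only [m] at hy
      split_ifs at hy with h1 h2 h3
      exact h3
    have m2 : ∀ y, m y = .go2 → f2 y ≠ H.null ∧ T (f2 y) x := by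
      intro y hy
      simp only [m] at hy
      split_ifs at hy with h1 h2 h3
      rcases Relation.ReflTransGen.cases_head h2 with h | ⟨z, ⟨rfl | rfl, hz⟩, hzx⟩
      · exact absurd h h1
      · exact absurd ⟨hz, hzx⟩ h3
      · exact ⟨hz, hzx⟩
    have m3 : ∀ y b, m y = .err b → y = x ∧ b = lab (f2 (f1 x)) := by
      intro y b hy
      simp only [m] at hy
      split_ifs at hy with h1
      exact ⟨h1, by simpa using hy.symm⟩
    refine ⟨fun y => ⟨m y, lab y, lab (f1 y), lab (f2 y)⟩, ?_, ?_, ?_, ?_, ?_⟩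
    · intro y hy hm
      rw [u1 _ _ hy] at hm
      exact moff _ hm hx
    · intro y z _ _ _ hyz
      rw [u1 _ _ hyz]
      refine ⟨rfl, fun h1 h2 => moff _ h2 (m1 _ h1).2, ?_⟩
      intro b hb
      obtain ⟨rfl, rfl⟩ := m3 _ _ hb
      rfl
    · intro y _ _ hy
      have hy := u1 _ _ hy
      refine ⟨?_, fun h1 => (m1 _ h1).1 hy.symm, ?_⟩
      · simp only [← hy, lab0]
      · intro b hb
        obtain ⟨rfl, rfl⟩ := m3 _ _ hb
        rw [← hy, n2, lab0]
    · intro y z _ _ _ hyz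
      rw [u2 _ _ hyz]
      refine ⟨rfl, fun h1 h2 => moff _ h2 (m2 _ h1).2, ?_⟩
      intro b hb
      obtain ⟨rfl, rfl⟩ := m3 _ _ hb
      exact labne
    · intro y _ _ hy
      have hy := u2 _ _ hy
      refine ⟨?_, fun h1 => (m2 _ h1).1 hy.symm, ?_⟩
      · simp only [← hy, lab0]
      · intro b hb
        obtain ⟨rfl, rfl⟩ := m3 _ _ hb
        rw [← hy, n1, lab0] at labne
        simpa using labne
  -- the grid
  let g : ℕ → ℕ → γ := fun i j => f1^[i] (f2^[j] c0)
  have g1 : ∀ i j, g (i + 1) j = f1 (g i j) := fun i j => Function.iterate_succ_apply' _ _ _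
  have g0 : ∀ j, g 0 (j + 1) = f2 (g 0 j) := fun j => Function.iterate_succ_apply' _ _ _
  let Rc : γ → Prop := fun x => x = H.null ∨ T c0 x
  have rc1 : ∀ x, Rc x → Rc (f1 x) := by
    rintro x (rfl | h)
    · left; exact n1
    · by_cases h1 : f1 x = H.null
      · left; exact h1
      · right; exact h.tail ⟨Or.inl rfl, h1⟩
  have rc2 : ∀ x, Rc x → Rc (f2 x) := by
    rintro x (rfl | h)
    · left; exact n2
    · by_cases h1 : f2 x = H.null
      · left; exact h1
      · right; exact h.tail ⟨Or.inr rfl, h1⟩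
  have rcc : ∀ x, Rc x → f1 (f2 x) = f2 (f1 x) := by
    rintro x (rfl | h)
    · rw [n1, n2, n1]
    · exact hcomm x h
  have grc : ∀ j i, Rc (g i j) := by
    intro j i
    induction i with
    | zero =>
      induction j with
      | zero => right; exact Relation.ReflTransGen.refl
      | succ j ih => rw [g0]; exact rc2 _ ih
    | succ i ih => rw [g1]; exact rc1 _ ih
  have g2 : ∀ i j, g i (j + 1) = f2 (g i j) := by
    intro i j
    induction i with
    | zero => exact g0 j
    | succ i ih => rw [g1, g1, ih, rcc _ (grc j i)]
  have hVf1 : ∀ x ∈ H.V, f1 x ∈ H.V := fun x hx => (hs1 _ _ (e1 x hx)).2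
  have hVf2 : ∀ x ∈ H.V, f2 x ∈ H.V := fun x hx => (hs2 _ _ (e2 x hx)).2
  have gV : ∀ j i, g i j ∈ H.V := by
    intro j i
    induction i with
    | zero =>
      induction j with
      | zero => exact hVf1 _ hroot
      | succ j ih => rw [g0]; exact hVf2 _ ih
    | succ i ih => rw [g1]; exact hVf1 _ ih
  have groot : ∀ i j, g i j ≠ H.root := by
    intro i j h
    rcases i with _ | i
    · rcases j with _ | j
      · have h1 : f1 H.root = H.root := h
        have := e1 _ hroot
        rw [h1] at this
        exact hc.noroot1 _ this
      · have := e2 _ (gV j 0)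
        rw [← g0, h] at this
        exact hc.noroot2 _ this
    · have := e1 _ (gV j i)
      rw [← g1, h] at this
      exact hc.noroot1 _ this
  have ex1 : ∀ x, Acc R x → ∃ i, f1^[i] x = H.null := by
    intro x hx
    induction hx with
    | intro x _ ih =>
      by_cases h : f1 x = H.null
      · exact ⟨1, h⟩
      · obtain ⟨i, hi⟩ := ih (f1 x) ⟨Or.inl rfl, h⟩
        exact ⟨i + 1, hi⟩
  have ex2 : ∀ x, Acc R x → ∃ i, f2^[i] x = H.null := by
    intro x hx
    induction hx with
    | intro x _ ih =>
      by_cases h : f2 x = H.null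
      · exact ⟨1, h⟩
      · obtain ⟨i, hi⟩ := ih (f2 x) ⟨Or.inr rfl, h⟩
        exact ⟨i + 1, hi⟩
  have first : ∀ f : ℕ → γ, f 0 ≠ H.null → (∃ i, f i = H.null) →
      ∃ w, (∀ i ≤ w, f i ≠ H.null) ∧ f (w + 1) = H.null := by
    intro f h0 hex
    have hs := Nat.find_spec hex
    have hm := fun i (hi : i < Nat.find hex) => Nat.find_min hex hi
    generalize Nat.find hex = k at hs hm
    rcases k with _ | k
    · exact absurd hs h0
    · exact ⟨k, fun i hi => hm i (by omega), hs⟩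
  obtain ⟨w, hw, hw'⟩ := first (fun i => g i 0) hc0 (ex1 _ hacc)
  obtain ⟨N, hN, hN'⟩ := first (fun j => g 0 j) hc0 (ex2 _ hacc)
  have sh : ∀ i j, g i j ≠ H.null → g (i + 1) j ≠ H.null →
      chainE n (c (g i j)) (c (g (i + 1) j)) ∧ P.h (d (g i j)) (d (g (i + 1) j)) := by
    intro i j h1 h2
    exact hc.h _ _ (groot i j) h1 h2 (g1 i j ▸ e1 _ (gV j i))
  have shn : ∀ i j, g i j ≠ H.null → g (i + 1) j = H.null →
      (c (g i j) = 0 ∨ c (g i j) = n + 3) ∧ P.hn (d (g i j)) := by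
    intro i j h1 h2
    have := e1 _ (gV j i)
    rw [← g1, h2] at this
    exact hc.hn _ (groot i j) h1 this
  have sv : ∀ i j, g i j ≠ H.null → g i (j + 1) ≠ H.null →
      P.v (d (g i j)) (d (g i (j + 1))) := by
    intro i j h1 h2
    exact (hc.v _ _ (groot i j) h1 h2 (g2 i j ▸ e2 _ (gV j i))).2
  have svn : ∀ i j, g i j ≠ H.null → g i (j + 1) = H.null → P.vn (d (g i j)) := by
    intro i j h1 h2
    have := e2 _ (gV j i)
    rw [← g2, h2] at this
    exact hc.vn _ (groot i j) h1 this
  have rowtp : ∀ j, (∀ i ≤ w, g i j ≠ H.null) → ∀ i ≤ w, (tp (d (g i j)) ↔ tp (d (g 0 j))) := by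
    intro j hj i
    induction i with
    | zero => simp
    | succ i ih =>
      intro hi
      rw [← ih (by omega)]
      exact (tp3 _ _ (sh i j (hj i (by omega)) (hj (i + 1) hi)).2).symm
  have rows : ∀ j ≤ N, (∀ i ≤ w, g i j ≠ H.null) ∧ g (w + 1) j = H.null := by
    intro j
    induction j with
    | zero => intro _; exact ⟨hw, hw'⟩
    | succ j ih =>
      intro hj
      obtain ⟨ih1, ih2⟩ := ih (by omega)
      refine ⟨?_, by rw [g2, ih2, n2]⟩
      intro i hi hnl
      have h1 := tp1 _ (svn i j (ih1 i hi) hnl)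
      rw [rowtp j ih1 i hi] at h1
      exact tp2 _ _ (sv 0 j (ih1 0 (by omega)) (hN (j + 1) hj)) h1
  have cpos : ∀ i ≤ w, 1 ≤ c (g i 0) := by
    intro i
    induction i with
    | zero => intro _; exact (hc.start _ (e1 _ hroot)).2.ge
    | succ i ih =>
      intro hi
      have h1 := ih (by omega)
      have h2 := (sh i 0 (hw i (by omega)) (hw (i + 1) hi)).1
      unfold chainE at h2
      omega
  refine ⟨w, N, fun i j => d (g i j), fun i => c (g i 0), ?_⟩
  constructor
  · exact (hc.start _ (e1 _ hroot)).1
  · exact (hc.start _ (e1 _ hroot)).2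
  · have := (shn w 0 (hw w le_rfl) hw').1
    have := cpos w le_rfl
    omega
  · intro i hi
    exact (sh i 0 (hw i hi.le) (hw (i + 1) hi)).1
  · intro i hi
    exact (hc.val _ (gV 0 i) (groot i 0) (hw i hi)).2
  · intro i hi j hj
    exact (hc.val _ (gV j i) (groot i j) ((rows j hj).1 i hi)).2.1
  · intro i hi j hj
    exact (sh i j ((rows j hj).1 i hi.le) ((rows j hj).1 (i + 1) hi)).2
  · intro j hj
    exact (shn w j ((rows j hj).1 w le_rfl) (rows j hj).2).2
  · intro i hi j hj
    exact sv i j ((rows j hj.le).1 i hi) ((rows (j + 1) hj).1 i hi)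
  · intro i hi
    have hr := (rows N le_rfl).1
    apply svn i N (hr i hi)
    by_contra hne
    refine tp2 _ _ (sv i N (hr i hi) hne) ?_
    rw [rowtp N hr i hi]
    exact tp1 _ (svn 0 N (hr 0 (by omega)) hN')

/-- The grid heap on `[0, w] × [0, N]`. -/
def gridF1 (w : ℕ) : Option (Option (ℕ × ℕ)) → Option (Option (ℕ × ℕ))
  | none => none
  | some none => some (some (0, 0))
  | some (some (i, j)) => if i < w then some (some (i + 1, j)) else none

def gridF2 (N : ℕ) : Option (Option (ℕ × ℕ)) → Option (Option (ℕ × ℕ))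
  | none => none
  | some none => none
  | some (some (i, j)) => if j < N then some (some (i, j + 1)) else none

def gridV (w N : ℕ) : Set (Option (Option (ℕ × ℕ))) :=
  {none, some none} ∪ (fun p => some (some p)) '' (Set.Iic w ×ˢ Set.Iic N)

def gridHeap (w N : ℕ) : PreGraph (Option (Option (ℕ × ℕ))) where
  V := gridV w N
  s1 x y := x ∈ gridV w N ∧ y = gridF1 w x
  s2 x y := x ∈ gridV w N ∧ y = gridF2 N x
  null := none
  root := some none

theorem mem_gridV {w N i j : ℕ} : some (some (i, j)) ∈ gridV w N ↔ i ≤ w ∧ j ≤ N := by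
  simp [gridV]

theorem gridHeap_isHeap (w N : ℕ) : (gridHeap w N).IsHeap := by
  have hn : (none : Option (Option (ℕ × ℕ))) ∈ gridV w N := by simp [gridV]
  have hr : (some none : Option (Option (ℕ × ℕ))) ∈ gridV w N := by simp [gridV]
  have hf1 : ∀ x ∈ gridV w N, gridF1 w x ∈ gridV w N := by
    rintro (_ | _ | ⟨i, j⟩) hx
    · exact hn
    · exact mem_gridV.2 (by simp)
    · have := mem_gridV.1 hx
      simp only [gridF1]
      split_ifs
      · exact mem_gridV.2 (by omega)
      · exact hn
  have hf2 : ∀ x ∈ gridV w N, gridF2 N x ∈ gridV w N := by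
    rintro (_ | _ | ⟨i, j⟩) hx
    · exact hn
    · exact hn
    · have := mem_gridV.1 hx
      simp only [gridF2]
      split_ifs
      · exact mem_gridV.2 (by omega)
      · exact hn
  refine ⟨⟨?_, hn, hr, by simp [gridHeap], ?_, ?_, ?_, ?_⟩, ?_, ?_, ?_⟩
  · exact (Set.toFinite _).union (((Set.finite_Iic w).prod (Set.finite_Iic N)).image _)
  · rintro x y ⟨hx, rfl⟩
    exact ⟨hx, hf1 x hx⟩
  · rintro x y ⟨hx, rfl⟩
    exact ⟨hx, hf2 x hx⟩
  · intro x
    exact ⟨fun h => h.2, fun h => ⟨hn, h⟩⟩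
  · intro x
    exact ⟨fun h => h.2, fun h => ⟨hn, h⟩⟩
  · intro x hx
    exact ⟨_, ⟨hx, rfl⟩, fun y hy => hy.2⟩
  · intro x hx
    exact ⟨_, ⟨hx, rfl⟩, fun y hy => hy.2⟩
  · have h0 : ∀ j ≤ N, Relation.ReflTransGen (gridHeap w N).edge (some none) (some (some (0, j))) := by
      intro j
      induction j with
      | zero => intro _; exact Relation.ReflTransGen.single (Or.inl ⟨hr, rfl⟩)
      | succ j ih =>
        intro hj
        refine (ih (by omega)).tail (Or.inr ⟨mem_gridV.2 (by omega), ?_⟩)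
        simp only [gridF2]
        rw [if_pos (by omega)]
    have h1 : ∀ j ≤ N, ∀ i ≤ w,
        Relation.ReflTransGen (gridHeap w N).edge (some none) (some (some (i, j))) := by
      intro j hj i
      induction i with
      | zero => intro _; exact h0 j hj
      | succ i ih =>
        intro hi
        refine (ih (by omega)).tail (Or.inl ⟨mem_gridV.2 (by omega), ?_⟩)
        simp only [gridF1]
        rw [if_pos (by omega)]
    rintro (_ | _ | ⟨i, j⟩) hx hne
    · exact absurd rfl hne
    · exact Relation.ReflTransGen.refl
    · have := mem_gridV.1 hx
      exact h1 j this.2 i this.1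

theorem grid_not_cc (w N : ℕ) (e : Option (Option (ℕ × ℕ)) → Col) :
    ¬ CC ccPat (gridHeap w N) e := by
  intro h
  let G := gridHeap w N
  have sh : ∀ i < w, ∀ j ≤ N, ccPat.h (e (some (some (i, j)))) (e (some (some (i + 1, j)))) := by
    intro i hi j hj
    refine h.h _ _ (by simp [gridHeap]) (by simp [gridHeap]) (by simp [gridHeap]) 
      ⟨mem_gridV.2 (by omega), ?_⟩
    simp [gridF1, hi]
  have shn : ∀ j ≤ N, ccPat.hn (e (some (some (w, j)))) := by
    intro j hj
    refine h.hn _ (by simp [gridHeap]) (by simp [gridHeap]) ⟨mem_gridV.2 (by omega), ?_⟩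
    simp [gridF1, gridHeap]
  have sv : ∀ i ≤ w, ∀ j < N, ccPat.v (e (some (some (i, j)))) (e (some (some (i, j + 1)))) := by
    intro i hi j hj
    refine h.v _ _ (by simp [gridHeap]) (by simp [gridHeap]) (by simp [gridHeap]) 
      ⟨mem_gridV.2 (by omega), ?_⟩
    simp [gridF2, hj]
  have svn : ∀ i ≤ w, ccPat.vn (e (some (some (i, N)))) := by
    intro i hi
    refine h.vn _ (by simp [gridHeap]) (by simp [gridHeap]) ⟨mem_gridV.2 (by omega), ?_⟩
    simp [gridF2, gridHeap]
  have main : ∀ t i j, i ≤ w → j ≤ N → (w - i) + (N - j) = t →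
      (e (some (some (i, j)))).m = .off := by
    intro t
    induction t using Nat.strong_induction_on with
    | _ t ih =>
      intro i j hi hj ht
      rcases hm : (e (some (some (i, j)))).m with _ | _ | b | _
      · exfalso
        rcases Nat.lt_or_ge i w with h1 | h1
        · exact (sh i h1 j hj).2.1 hm (ih _ (by omega) (i + 1) j h1 hj rfl)
        · obtain rfl : i = w := by omega
          exact (shn j hj).2.1 hm
      · exfalso
        rcases Nat.lt_or_ge j N with h1 | h1
        · exact (sv i hi j h1).2.1 hm (ih _ (by omega) i (j + 1) hi h1 rfl)
        · obtain rfl : j = N := by omega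
          exact (svn i hi).2.1 hm
      · exfalso
        rcases Nat.lt_or_ge i w with h1 | h1
        · have a1 := (sh i h1 j hj).2.2 b hm
          rcases Nat.lt_or_ge j N with h2 | h2
          · have a2 := (sv i hi j h2).2.2 b hm
            have a3 := (sv (i + 1) h1 j h2).1
            have a4 := (sh i h1 (j + 1) h2).1
            rw [a1] at a3
            rw [a2] at a4
            rw [← a4] at a3
            simp at a3
          · obtain rfl : j = N := by omega
            have a2 := (svn i hi).2.2 b hm
            have a3 := (svn (i + 1) h1).1
            rw [a1, a2] at a3
            simp at a3
        · obtain rfl : i = w := by omega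
          have a1 := (shn j hj).2.2 b hm
          rcases Nat.lt_or_ge j N with h2 | h2
          · have a2 := (sv i hi j h2).2.2 b hm
            have a3 := (shn (j + 1) h2).1
            rw [a2, a1] at a3
            simp at a3
          · obtain rfl : j = N := by omega
            have a2 := (svn i hi).2.2 b hm
            rw [a1] at a2
            simp at a2
      · rfl
  have hst : (e (some (some (0, 0)))).m ≠ .off :=
    h.start _ ⟨by simp [gridHeap, gridV], rfl⟩
  exact hst (main _ 0 0 (by omega) (by omega) rfl)

theorem rect_colors {D : Type} {P : Pat D} {n w N : ℕ} {τ : ℕ → ℕ → D} {c : ℕ → ℕ}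
    (R : Rect P n w N τ c) (hcb : ∀ i ≤ w, c i < n + 4) : ∃ d c', Colors P n (gridHeap w N) d c' := by
  refine ⟨fun x => match x with
    | some (some (i, j)) => τ i j
    | _ => τ 0 0, fun x => match x with
    | some (some (i, 0)) => c i
    | _ => 0, ?_⟩
  constructor
  · exact ⟨by simp [gridHeap, gridV], rfl⟩
  · rintro ⟨-, h⟩
    simp [gridHeap, gridF1] at h
  · rintro (_ | _ | ⟨i, j⟩) ⟨-, h⟩
    · simp [gridHeap, gridF1] at h
    · simp [gridHeap, gridF1] at h
    · simp only [gridHeap, gridF1] at h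
      split_ifs at h; simp at h
  · rintro (_ | _ | ⟨i, j⟩) ⟨-, h⟩
    · simp [gridHeap, gridF2] at h
    · simp [gridHeap, gridF2] at h
    · simp only [gridHeap, gridF2] at h
      split_ifs at h; simp at h
  · rintro y ⟨-, rfl⟩
    exact ⟨R.st, R.c0⟩
  · rintro (_ | _ | ⟨i, _ | j⟩) hx h1 h2
    · exact absurd rfl h2
    · exact absurd rfl h1
    · have := mem_gridV.1 hx
      exact ⟨hcb i this.1, R.val0 i this.1⟩
    · have := mem_gridV.1 hx
      have hv : P.valid n 0 (τ i (j + 1)) := ⟨R.hW i this.1 _ this.2, fun h => absurd h (by omega),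
        fun h => absurd h (by omega), fun h => absurd h (by omega), fun h => absurd h (by omega)⟩
      exact ⟨Nat.succ_pos _, hv⟩
  · rintro (_ | _ | ⟨i, j⟩) y h1 h2 h3 ⟨hx, rfl⟩
    · exact absurd rfl h2
    · exact absurd rfl h1
    · have := mem_gridV.1 hx
      simp only [gridF1] at h3 ⊢
      split_ifs at h3 ⊢ with h4
      · refine ⟨?_, R.h i h4 j this.2⟩
        rcases j with _ | j
        · exact R.chain i h4
        · exact Or.inl ⟨rfl, rfl⟩
      · exact absurd rfl h3
  · rintro (_ | _ | ⟨i, j⟩) h1 h2 ⟨hx, h3⟩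
    · exact absurd rfl h2
    · exact absurd rfl h1
    · have := mem_gridV.1 hx
      simp only [gridF1, gridHeap] at h3
      split_ifs at h3 with h4
      obtain rfl : i = w := by omega
      refine ⟨?_, R.hn j this.2⟩
      rcases j with _ | j
      · exact Or.inr R.cw
      · exact Or.inl rfl
  · rintro (_ | _ | ⟨i, j⟩) y h1 h2 h3 ⟨hx, rfl⟩
    · exact absurd rfl h2
    · exact absurd rfl h1
    · have := mem_gridV.1 hx
      simp only [gridF2] at h3 ⊢
      split_ifs at h3 ⊢ with h4
      · exact ⟨rfl, R.v i this.1 j h4⟩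
      · exact absurd rfl h3
  · rintro (_ | _ | ⟨i, j⟩) h1 h2 ⟨hx, h3⟩
    · exact absurd rfl h2
    · exact absurd rfl h1
    · have := mem_gridV.1 hx
      simp only [gridF2, gridHeap] at h3
      split_ifs at h3 with h4
      obtain rfl : j = N := by omega
      exact R.vn i this.1



theorem enc_list {α : Type} [Encodable α] (l : List α) : Encodable.encode l = Encodable.encode (l.map Encodable.encode) := by
  induction l with
  | nil => rfl
  | cons a l ih => simp [Encodable.encode_list_cons, ih]
theorem enc_arrow {α : Type} [Encodable α] (N : ℕ) (f : Fin N → α) :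
   @Encodable.encode _ Encodable.finArrow f = Encodable.encode (List.ofFn f) := by
  have : @Encodable.encode _ Encodable.finArrow f = Encodable.encode (List.Vector.ofFn f).toList := rfl
  rw [this, List.Vector.toList_ofFn]
theorem enc_pi {α : Type} [i : Encodable α] (N : ℕ) (f : Fin N → α) :
   @Encodable.encode _ (Encodable.finPi N (fun _ => α)) f = Encodable.encode (List.ofFn fun i => Nat.pair i (Encodable.encode (f i))) := by
  have : @Encodable.encode _ (Encodable.finPi N (fun _ => α)) f = @Encodable.encode (Fin N → Σ _ : Fin N, α) Encodable.finArrow (fun i => ⟨i, f i⟩) := rfl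
  rw [this, enc_arrow, enc_list, List.map_ofFn]
  rfl
theorem ofFn_range {α : Type} (N : ℕ) (f : ℕ → α) : (List.ofFn fun i : Fin N => f i) = (List.range N).map f := by
  apply List.ext_getElem <;> simp
theorem enc_rel (N : ℕ) (b : ℕ → ℕ → Bool) :
    @Encodable.encode _ (Encodable.finPi N (fun _ => Fin N → Bool)) (fun i j => b i j) =
    Encodable.encode ((List.range N).map fun i => Nat.pair i (Encodable.encode ((List.range N).map
      fun j => Nat.pair j (Encodable.encode (b i j))))) := by
  rw [enc_pi, ← ofFn_range]
  congr 2
  funext i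
  rw [← ofFn_range]
  congr 1
  exact enc_pi N (fun j => b i j)
theorem enc_graph (G : FinGraph) : G.encode = Nat.pair G.n (Nat.pair (@Encodable.encode _ (Encodable.finPi G.n (fun _ => Fin G.n → Bool)) G.s1) (Nat.pair (@Encodable.encode _ (Encodable.finPi G.n (fun _ => Fin G.n → Bool)) G.s2) (Nat.pair G.null G.root))) := by
  rfl

theorem encode_inj {G G' : FinGraph} (h : G.encode = G'.encode) : G = G' := by
  have := Encodable.encode_injective h
  cases G; cases G'
  simp only [Sigma.mk.injEq] at this
  obtain ⟨rfl, h2⟩ := this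
  simp only [heq_eq_eq, Prod.mk.injEq] at h2
  obtain ⟨rfl, rfl, rfl, rfl⟩ := h2
  rfl

/-- Primitive recursive families of relations have primitive recursive codes. -/
theorem prim_rel (N : ℕ → ℕ) (hN : Primrec N) (b : ℕ → ℕ → ℕ → Bool)
    (hb : Primrec fun x : ℕ × ℕ × ℕ => b x.1 x.2.1 x.2.2) :
    Primrec fun n => @Encodable.encode _ (Encodable.finPi (N n) (fun _ => Fin (N n) → Bool))
      (fun i j => b n i j) := by
  simp only [enc_rel]
  refine Primrec.encode.comp (Primrec.list_map (Primrec.list_range.comp hN) ?_)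
  refine Primrec₂.natPair.comp Primrec.snd ?_
  refine Primrec.encode.comp (Primrec.list_map (Primrec.list_range.comp (hN.comp Primrec.fst)) ?_)
  refine Primrec₂.natPair.comp Primrec.snd (Primrec.encode.comp ?_)
  exact hb.comp (Primrec.pair (Primrec.fst.comp Primrec.fst)
    (Primrec.pair (Primrec.snd.comp Primrec.fst) Primrec.snd))

section Fam
variable {m : ℕ}

def col (m i : ℕ) : Fin (m + 1) := Fin.ofNat (m + 1) (i - 2)
def idx (m i : ℕ) : ℕ := (i - 2) / (m + 1)
def nodeOf (m : ℕ) (d : Fin (m + 1)) (c : ℕ) : ℕ := 2 + ((m + 1) * c + d)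

theorem col_nodeOf (d : Fin (m + 1)) (c : ℕ) : col m (nodeOf m d c) = d := by
  apply Fin.ext
  simp [col, nodeOf, Nat.mod_eq_of_lt d.2]

theorem idx_nodeOf (d : Fin (m + 1)) (c : ℕ) : idx m (nodeOf m d c) = c := by
  simp [idx, nodeOf, Nat.mul_add_div, Nat.div_eq_of_lt d.2]

def size (m n : ℕ) : ℕ := 2 + (m + 1) * (n + 4)

theorem nodeOf_lt {d : Fin (m + 1)} {c n : ℕ} (h : c < n + 4) : nodeOf m d c < size m n := by
  have h1 : (m + 1) * (c + 1) ≤ (m + 1) * (n + 4) := Nat.mul_le_mul_left _ h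
  have := d.2
  unfold nodeOf size
  rw [Nat.mul_succ (m + 1) c] at h1
  omega

theorem idx_lt {i n : ℕ} (h : i < size m n) : idx m i < n + 4 := by
  unfold idx
  rw [Nat.div_lt_iff_lt_mul (Nat.succ_pos m), Nat.mul_comm]
  have : 0 < (m + 1) * (n + 4) := by positivity
  unfold size at h
  simp only [Nat.succ_eq_add_one] at *
  omega

def E1 (P : Pat (Fin (m + 1))) (n i j : ℕ) : Prop :=
  (i = 0 ∧ j = 0) ∨ (i = 1 ∧ 2 ≤ j ∧ P.st (col m j) ∧ idx m j = 1) ∨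
  (2 ≤ i ∧ P.valid n (idx m i) (col m i) ∧
    ((j = 0 ∧ (idx m i = 0 ∨ idx m i = n + 3) ∧ P.hn (col m i)) ∨
     (2 ≤ j ∧ chainE n (idx m i) (idx m j) ∧ P.h (col m i) (col m j))))

def E2 (P : Pat (Fin (m + 1))) (i j : ℕ) : Prop :=
  (i ≤ 1 ∧ j = 0) ∨ (2 ≤ i ∧ j = 0 ∧ P.vn (col m i)) ∨
  (2 ≤ i ∧ 2 ≤ j ∧ idx m j = 0 ∧ P.v (col m i) (col m j))

theorem prim_col : Primrec (col m) := by
  rw [← Primrec.fin_val_iff]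
  exact Primrec.nat_mod.comp (Primrec.nat_sub.comp Primrec.id (Primrec.const 2)) (Primrec.const (m + 1))

theorem prim_idx : Primrec (idx m) :=
  Primrec.nat_div.comp (Primrec.nat_sub.comp Primrec.id (Primrec.const 2)) (Primrec.const (m + 1))

theorem prim_fin {α : Type} [Primcodable α] [Finite α] (p : α → Prop) : PrimrecPred p := by
  classical
  exact ⟨fun _ => inferInstance, Primrec.dom_finite _⟩

theorem prim_fin1 {p : Fin (m + 1) → Prop} {α : Type} [Primcodable α] {f : α → ℕ} (hf : Primrec f) :
    PrimrecPred fun x => p (col m (f x)) :=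
  (prim_fin p).comp (prim_col.comp hf)

theorem prim_fin2 {p : Fin (m + 1) → Fin (m + 1) → Prop} {α : Type} [Primcodable α] {f g : α → ℕ}
    (hf : Primrec f) (hg : Primrec g) : PrimrecPred fun x => p (col m (f x)) (col m (g x)) :=
  (prim_fin (fun z : Fin (m + 1) × Fin (m + 1) => p z.1 z.2)).comp
    (Primrec.pair (prim_col.comp hf) (prim_col.comp hg))

theorem prim_imp {α : Type} [Primcodable α] {p q : α → Prop} (hp : PrimrecPred p)
    (hq : PrimrecPred q) : PrimrecPred fun x => p x → q x := by
  have := hp.not.or hq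
  refine this.of_eq fun x => ?_
  tauto

theorem prim_valid {P : Pat (Fin (m + 1))} {α : Type} [Primcodable α] {n a i : α → ℕ}
    (hn : Primrec n) (ha : Primrec a) (hi : Primrec i) :
    PrimrecPred fun x => P.valid (n x) (a x) (col m (i x)) := by
  have h3 : Primrec fun x => n x + 3 := Primrec.nat_add.comp hn (Primrec.const 3)
  exact (prim_fin1 hi).and ((prim_imp (Primrec.eq.comp ha (Primrec.const 1)) (prim_fin1 hi)).and
    ((prim_imp (Primrec.eq.comp ha (Primrec.const 2)) (prim_fin1 hi)).and
    ((prim_imp (Primrec.nat_lt.comp (Primrec.const 2) ha)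
      (prim_imp (Primrec.nat_lt.comp ha h3) (prim_fin1 hi))).and
      (prim_imp (Primrec.eq.comp ha h3) (prim_fin1 hi)))))

theorem prim_chain {α : Type} [Primcodable α] {n a b : α → ℕ}
    (hn : Primrec n) (ha : Primrec a) (hb : Primrec b) :
    PrimrecPred fun x => chainE (n x) (a x) (b x) := by
  have h3 : Primrec fun x => n x + 3 := Primrec.nat_add.comp hn (Primrec.const 3)
  have e : ∀ {f : α → ℕ} (k : ℕ), Primrec f → PrimrecPred fun x => f x = k :=
    fun k hf => Primrec.eq.comp hf (Primrec.const k)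
  exact ((e 0 ha).and (e 0 hb)).or (((e 1 ha).and (e 1 hb)).or
    (((Primrec.nat_le.comp (Primrec.const 1) ha).and ((Primrec.nat_lt.comp ha h3).and
      (Primrec.eq.comp hb (Primrec.succ.comp ha)))).or
      ((Primrec.eq.comp ha h3).and (Primrec.eq.comp hb h3))))

theorem prim_E1 (P : Pat (Fin (m + 1))) :
    PrimrecPred fun x : ℕ × ℕ × ℕ => E1 P x.1 x.2.1 x.2.2 := by
  have hn : Primrec fun x : ℕ × ℕ × ℕ => x.1 := Primrec.fst
  have hi : Primrec fun x : ℕ × ℕ × ℕ => x.2.1 := Primrec.fst.comp Primrec.snd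
  have hj : Primrec fun x : ℕ × ℕ × ℕ => x.2.2 := Primrec.snd.comp Primrec.snd
  have h3 : Primrec fun x : ℕ × ℕ × ℕ => x.1 + 3 := Primrec.nat_add.comp hn (Primrec.const 3)
  have e : ∀ {f : ℕ × ℕ × ℕ → ℕ} (k : ℕ), Primrec f → PrimrecPred fun x => f x = k :=
    fun k hf => Primrec.eq.comp hf (Primrec.const k)
  have l : ∀ {f : ℕ × ℕ × ℕ → ℕ} (k : ℕ), Primrec f → PrimrecPred fun x => k ≤ f x :=
    fun k hf => Primrec.nat_le.comp (Primrec.const k) hf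
  have ii := prim_idx (m := m) |>.comp hi
  have ij := prim_idx (m := m) |>.comp hj
  exact ((e 0 hi).and (e 0 hj)).or
    (((e 1 hi).and ((l 2 hj).and ((prim_fin1 hj).and (e 1 ij)))).or
    ((l 2 hi).and ((prim_valid hn ii hi).and
      (((e 0 hj).and (((e 0 ii).or (Primrec.eq.comp ii h3)).and (prim_fin1 hi))).or
        ((l 2 hj).and ((prim_chain hn ii ij).and (prim_fin2 hi hj)))))))

theorem prim_E2 (P : Pat (Fin (m + 1))) :
    PrimrecPred fun x : ℕ × ℕ × ℕ => E2 P x.2.1 x.2.2 := by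
  have hi : Primrec fun x : ℕ × ℕ × ℕ => x.2.1 := Primrec.fst.comp Primrec.snd
  have hj : Primrec fun x : ℕ × ℕ × ℕ => x.2.2 := Primrec.snd.comp Primrec.snd
  have e : ∀ {f : ℕ × ℕ × ℕ → ℕ} (k : ℕ), Primrec f → PrimrecPred fun x => f x = k :=
    fun k hf => Primrec.eq.comp hf (Primrec.const k)
  have l : ∀ {f : ℕ × ℕ × ℕ → ℕ} (k : ℕ), Primrec f → PrimrecPred fun x => k ≤ f x :=
    fun k hf => Primrec.nat_le.comp (Primrec.const k) hf
  have ij := prim_idx (m := m) |>.comp hj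
  exact ((Primrec.nat_le.comp hi (Primrec.const 1)).and (e 0 hj)).or
    (((l 2 hi).and ((e 0 hj).and (prim_fin1 hi))).or
    ((l 2 hi).and ((l 2 hj).and ((e 0 ij).and (prim_fin2 hi hj)))))

theorem size_gt (m n : ℕ) : 1 < size m n := by
  have : 0 < (m + 1) * (n + 4) := by positivity
  unfold size
  omega

open Classical in
noncomputable def Fam (P : Pat (Fin (m + 1))) (n : ℕ) : FinGraph where
  n := size m n
  s1 i j := decide (E1 P n i j)
  s2 i j := decide (E2 P i j)
  null := ⟨0, by have := size_gt m n; omega⟩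
  root := ⟨1, size_gt m n⟩
  root_ne_null := by simp
  null_s1 := by
    intro x
    simp [E1, Fin.ext_iff]
  null_s2 := by
    intro x
    simp [E2, Fin.ext_iff]

theorem prim_Fam (P : Pat (Fin (m + 1))) : Primrec fun n => (Fam P n).encode := by
  classical
  have hs : Primrec (size m) := Primrec.nat_add.comp (Primrec.const 2)
    (Primrec.nat_mul.comp (Primrec.const _) (Primrec.nat_add.comp Primrec.id (Primrec.const 4)))
  have h1 := prim_rel (size m) hs (fun n i j => decide (E1 P n i j)) (by
    obtain ⟨_, h⟩ := prim_E1 P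
    exact h.of_eq fun x => by congr)
  have h2 := prim_rel (size m) hs (fun n i j => decide (E2 P i j)) (by
    obtain ⟨_, h⟩ := prim_E2 P
    exact h.of_eq fun x => by congr)
  refine (Primrec₂.natPair.comp hs (Primrec₂.natPair.comp h1 (Primrec₂.natPair.comp h2
    (Primrec.const (Nat.pair 0 1))))).of_eq fun n => ?_
  rw [enc_graph]
  unfold Fam
  congr!

theorem maps_Fam (P : Pat (Fin (m + 1))) (n : ℕ) {γ : Type} {H : PreGraph γ} (hH : H.IsHeap) :
    PreGraph.Maps H (Fam P n).toPreGraph ↔ ∃ d c, Colors P n H d c := by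
  classical
  obtain ⟨⟨-, hnull, hroot, hrn, hs1, hs2, hnull1, hnull2⟩, ht1, ht2, -⟩ := hH
  have s1i : ∀ i j, (Fam P n).toPreGraph.s1 i j ↔ E1 P n i j := fun i j => by
    simp [FinGraph.toPreGraph, Fam]
  have s2i : ∀ i j, (Fam P n).toPreGraph.s2 i j ↔ E2 P i j := fun i j => by
    simp [FinGraph.toPreGraph, Fam]
  constructor
  · rintro ⟨f, -, f1, f2, fr, fn⟩
    have e1 : ∀ x y, H.s1 x y → E1 P n (f x) (f y) := fun x y h => (s1i _ _).1 (f1 x y h)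
    have e2 : ∀ x y, H.s2 x y → E2 P (f x) (f y) := fun x y h => (s2i _ _).1 (f2 x y h)
    have r : ∀ x ∈ H.V, ((f x).val = 1 ↔ x = H.root) := fun x hx => by
      rw [← fr x hx, Fin.ext_iff]; rfl
    have z : ∀ x ∈ H.V, ((f x).val = 0 ↔ x = H.null) := fun x hx => by
      rw [← fn x hx, Fin.ext_iff]; rfl
    have r0 := (r _ hroot).2 rfl
    have z0 := (z _ hnull).2 rfl
    have big : ∀ x ∈ H.V, x ≠ H.root → x ≠ H.null → 2 ≤ (f x).val := fun x hx h1 h2 => by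
      have := (r x hx).not.2 h1
      have := (z x hx).not.2 h2
      omega
    refine ⟨fun x => col m (f x), fun x => idx m (f x), ?_⟩
    constructor
    · obtain ⟨y, hy, -⟩ := ht2 _ hroot
      have h := e2 _ _ hy
      have : (f y).val = 0 := by unfold E2 at h; omega
      rwa [(z y (hs2 _ _ hy).2).1 this] at hy
    · intro hy
      have h := e1 _ _ hy
      unfold E1 at h; omega
    · intro x hx
      have h := e1 _ _ hx
      unfold E1 at h; omega
    · intro x hx
      have h := e2 _ _ hx
      unfold E2 at h; omega
    · intro y hy
      have h := e1 _ _ hy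
      rcases h with h | h | h
      · omega
      · exact h.2.2
      · omega
    · intro x hx h1 h2
      have hb := big x hx h1 h2
      refine ⟨idx_lt (f x).2, ?_⟩
      obtain ⟨y, hy, -⟩ := ht1 _ hx
      rcases e1 _ _ hy with h | h | h
      · omega
      · omega
      · exact h.2.1
    · intro x y h1 h2 h3 hy
      have hb := big x (hs1 _ _ hy).1 h1 h2
      have := (z y (hs1 _ _ hy).2).not.2 h3
      rcases e1 _ _ hy with h | h | h
      · omega
      · omega
      · rcases h.2.2 with h | h
        · omega
        · exact h.2
    · intro x h1 h2 hy
      have hb := big x (hs1 _ _ hy).1 h1 h2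
      rcases e1 _ _ hy with h | h | h
      · omega
      · omega
      · rcases h.2.2 with h | h
        · exact h.2
        · omega
    · intro x y h1 h2 h3 hy
      have hb := big x (hs2 _ _ hy).1 h1 h2
      have := (z y (hs2 _ _ hy).2).not.2 h3
      rcases e2 _ _ hy with h | h | h
      · omega
      · omega
      · exact h.2.2
    · intro x h1 h2 hy
      have hb := big x (hs2 _ _ hy).1 h1 h2
      rcases e2 _ _ hy with h | h | h
      · omega
      · exact h.2.2
      · omega
  · rintro ⟨d, c, C⟩
    let g : γ → ℕ := fun x => if x ∈ H.V then (if x = H.null then 0 else if x = H.root then 1 else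
      nodeOf m (d x) (c x)) else 0
    have gn : g H.null = 0 := by simp [g]
    have gr : g H.root = 1 := by simp [g, hroot, hrn]
    have gx : ∀ x ∈ H.V, x ≠ H.root → x ≠ H.null → g x = nodeOf m (d x) (c x) :=
      fun x hx h1 h2 => by simp [g, hx, h1, h2]
    have n2 : ∀ d c, 2 ≤ nodeOf m d c := fun d c => by unfold nodeOf; omega
    have glt : ∀ x, g x < size m n := by
      intro x
      have := size_gt m n
      by_cases hx : x ∈ H.V
      · by_cases h1 : x = H.null
        · rw [h1, gn]; omega
        · by_cases h2 : x = H.root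
          · rw [h2, gr]; omega
          · rw [gx x hx h2 h1]
            exact nodeOf_lt (C.val x hx h2 h1).1
      · simp only [g, if_neg hx]; omega
    refine ⟨fun x => ⟨g x, glt x⟩, fun _ _ => Set.mem_univ _, ?_, ?_, ?_, ?_⟩
    · intro x y hy
      rw [s1i]
      change E1 P n (g x) (g y)
      obtain ⟨hx, hyV⟩ := hs1 _ _ hy
      by_cases h1 : x = H.null
      · subst h1
        have := (hnull1 y).1 hy
        rw [this, gn]
        exact Or.inl ⟨rfl, rfl⟩
      · have yr : y ≠ H.root := fun h => C.noroot1 x (h ▸ hy)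
        by_cases h2 : x = H.root
        · subst h2
          have yn : y ≠ H.null := fun h => C.root1 (h ▸ hy)
          rw [gr, gx y hyV yr yn]
          refine Or.inr (Or.inl ⟨rfl, n2 _ _, ?_⟩)
          rw [col_nodeOf, idx_nodeOf]
          exact C.start y hy
        · rw [gx x hx h2 h1]
          refine Or.inr (Or.inr ⟨n2 _ _, ?_⟩)
          rw [col_nodeOf, idx_nodeOf]
          refine ⟨(C.val x hx h2 h1).2, ?_⟩
          by_cases yn : y = H.null
          · subst yn
            exact Or.inl ⟨gn, C.hn x h2 h1 hy⟩
          · rw [gx y hyV yr yn, col_nodeOf, idx_nodeOf]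
            exact Or.inr ⟨n2 _ _, C.h x y h2 h1 yn hy⟩
    · intro x y hy
      rw [s2i]
      change E2 P (g x) (g y)
      obtain ⟨hx, hyV⟩ := hs2 _ _ hy
      by_cases h1 : x = H.null
      · subst h1
        have := (hnull2 y).1 hy
        rw [this, gn]
        exact Or.inl ⟨by omega, rfl⟩
      · have yr : y ≠ H.root := fun h => C.noroot2 x (h ▸ hy)
        by_cases h2 : x = H.root
        · subst h2
          have yn : y = H.null := (ht2 _ hroot).unique hy C.root2
          rw [gr, yn, gn]
          exact Or.inl ⟨le_rfl, rfl⟩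
        · rw [gx x hx h2 h1]
          by_cases yn : y = H.null
          · subst yn
            refine Or.inr (Or.inl ⟨n2 _ _, gn, ?_⟩)
            rw [col_nodeOf]
            exact C.vn x h2 h1 hy
          · rw [gx y hyV yr yn]
            refine Or.inr (Or.inr ⟨n2 _ _, n2 _ _, ?_⟩)
            rw [col_nodeOf, col_nodeOf, idx_nodeOf]
            exact C.v x y h2 h1 yn hy
    · intro x hx
      rw [Fin.ext_iff]
      change g x = 1 ↔ _
      by_cases h1 : x = H.null
      · rw [h1, gn]; simp [hrn.symm]
      · by_cases h2 : x = H.root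
        · rw [h2, gr]; simp
        · rw [gx x hx h2 h1]
          have := n2 (d x) (c x)
          simp only [h2, iff_false]; omega
    · intro x hx
      rw [Fin.ext_iff]
      change g x = 0 ↔ _
      by_cases h1 : x = H.null
      · rw [h1, gn]; simp
      · by_cases h2 : x = H.root
        · rw [h2, gr]; simp [hrn]
        · rw [gx x hx h2 h1]
          have := n2 (d x) (c x)
          simp only [h1, iff_false]; omega

end Fam

def Pat.comap {D D' : Type} (P : Pat D) (δ : D' → D) : Pat D' where
  W x := P.W (δ x)
  st x := P.st (δ x)
  V1 x := P.V1 (δ x)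
  V2 x := P.V2 (δ x)
  V3 x := P.V3 (δ x)
  V4 x := P.V4 (δ x)
  hn x := P.hn (δ x)
  vn x := P.vn (δ x)
  h x y := P.h (δ x) (δ y)
  v x y := P.v (δ x) (δ y)

theorem colors_comap {D D' γ : Type} (P : Pat D) (δ : D' → D) (hδ : Function.Surjective δ) {n : ℕ}
    {H : PreGraph γ} : (∃ d c, Colors (P.comap δ) n H d c) ↔ ∃ d c, Colors P n H d c := by
  have key : ∀ d c, Colors (P.comap δ) n H d c ↔ Colors P n H (fun x => δ (d x)) c := by
    intro d c
    constructor <;> intro C <;>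
    exact ⟨C.root2, C.root1, C.noroot1, C.noroot2, C.start, C.val, C.h, C.hn, C.v, C.vn⟩
  constructor
  · rintro ⟨d, c, C⟩
    exact ⟨_, c, (key d c).1 C⟩
  · rintro ⟨d, c, C⟩
    choose κ hκ using hδ
    refine ⟨fun x => κ (d x), c, (key _ _).2 ?_⟩
    simpa only [hκ] using C

/-- Every pattern over a finite nonempty colour set has a computable family of graphs. -/
theorem exists_family {D : Type} [Finite D] [Nonempty D] (P : Pat D) :
    ∃ F : ℕ → FinGraph, (Primrec fun n => (F n).encode) ∧
      ∀ (n : ℕ) (γ : Type) (H : PreGraph γ), H.IsHeap →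
        (PreGraph.Maps H (F n).toPreGraph ↔ ∃ d c, Colors P n H d c) := by
  obtain ⟨k, ⟨e⟩⟩ := Finite.exists_equiv_fin D
  obtain ⟨m, rfl⟩ : ∃ m, k = m + 1 := by
    rcases k with _ | m
    · exact (e (Classical.arbitrary D)).elim0
    · exact ⟨m, rfl⟩
  refine ⟨fun n => Fam (P.comap e.symm) n, prim_Fam _, fun n γ H hH => ?_⟩
  rw [maps_Fam _ _ hH, colors_comap _ _ e.symm.surjective]

open Turing in
theorem final : ¬ ComputablePred (fun m : ℕ =>
      ∃ G1 G2 : FinGraph, m = encodePair G1 G2 ∧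
        HeapEquiv G1.toPreGraph G2.toPreGraph) := by
  intro hcomp
  obtain ⟨Γ, Λ, _, _, _, M, S, X, B, hS, hsup, hun⟩ := source_tm
  apply hun
  have fin1 : Finite (Tile Γ Λ S) := Tile.finite S hS
  have fin2 : Finite Col := Col.finite
  have ne2 : Nonempty Col := ⟨⟨.off, false, false, false⟩⟩
  have ne1 : Nonempty (Tile Γ Λ S) :=
    ⟨⟨⟨default, hsup.1⟩, default, default, default, default, 0, false, false⟩⟩
  obtain ⟨F, hF, hF'⟩ := exists_family (tmPat M S X B)
  obtain ⟨F2, hF2, hF2'⟩ := exists_family (prodPat (tmPat M S X B) ccPat)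
  have key : ∀ n, HeapEquiv (F n).toPreGraph (F2 n).toPreGraph ↔
      ¬ (StateTransition.eval (TM0.step M) (TM0.init (X :: List.replicate n B))).Dom := by
    intro n
    constructor
    · intro hE hd
      obtain ⟨w, N, τ, c, R⟩ := halts_rect (n := n) hsup hd
      obtain ⟨k, hk, hk1, hk2⟩ := chain_shape R.c0 R.cw R.chain
      have hcb : ∀ i ≤ w, c i < n + 4 := by
        intro i hi
        by_cases h : i < k
        · rw [hk1 i h]; omega
        · rw [hk2 i (by omega) hi]; omega
      have hg := gridHeap_isHeap w N
      have h1 := (hF' n _ _ hg).2 (rect_colors R hcb)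
      have h2 := (hF2' n _ _ hg).1 ((hE _ _ hg).1 h1)
      obtain ⟨-, e, he⟩ := colors_prod.1 h2
      exact grid_not_cc w N e he
    · intro hd γ H hH
      rw [hF' n _ _ hH, hF2' n _ _ hH, colors_prod]
      refine ⟨fun h => ⟨h, ?_⟩, fun h => h.1⟩
      by_contra hcc
      obtain ⟨d, c, C⟩ := h
      obtain ⟨w, N, τ, c, R⟩ := colors_rect (fun t => M t.q t.hd = none)
        (fun t h => h)
        (fun t t' h hn => by
          obtain ⟨-, -, -, q', a, h, -⟩ := h
          rw [hn] at h
          cases h)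
        (fun t t' h => by
          obtain ⟨-, h1, h2, -⟩ := h
          rw [h1, h2]) hH C hcc
      exact hd (rect_halts R)
  have hpair : Computable fun n => encodePair (F n) (F2 n) :=
    (Primrec₂.natPair.comp hF hF2).to_comp
  have h1 : ComputablePred fun n => ¬ (StateTransition.eval (TM0.step M)
      (TM0.init (X :: List.replicate n B))).Dom := by
    obtain ⟨_, hc⟩ := hcomp
    classical
    refine ⟨fun n => Classical.dec _, (hc.comp hpair).of_eq fun n => ?_⟩
    rw [decide_eq_decide]
    refine Iff.trans ?_ (key n)
    constructor
    · rintro ⟨G1, G2, h, hE⟩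
      obtain ⟨h1, h2⟩ := Nat.pair_eq_pair.1 h
      rwa [encode_inj h1, encode_inj h2]
    · exact fun h => ⟨_, _, rfl, h⟩
  exact h1.not.of_eq fun n => not_not
end HeapUndec

/-- The equivalence problem for regular graph constraints over the class of
heaps is undecidable: the set of (codes of) pairs `⟨G1, G2⟩` of finite graphs
with `G1 ≈_H G2` is not a computable set of natural numbers. -/
theorem equivalence_over_heaps_undecidable :
    ¬ ComputablePred (fun m : ℕ =>
      ∃ G1 G2 : FinGraph, m = encodePair G1 G2 ∧
        HeapEquiv G1.toPreGraph G2.toPreGraph) := by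
  exact HeapUndec.final
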